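/- Let α ∈ (0,2) and β > 0 with αβ > 1, and define S_{α,β}(ω) = −(1/π) Im ∫₀^∞ e^{−ωu} (1 + e^{iπα/2} u^α)^{−β} du for ω > 0 (principal branch). Then lim_{ω→0⁺} S_{α,β}(ω) = Γ(1/α) Γ(β − 1/α) / (π α Γ(β)). (The spectral density of the one-dimensional GFGCC has a finite positive limit at zero frequency in the short-range-dependence regime αβ > 1.) -/

import Mathlib

open Filter

/-- Spectral density of the one-dimensional GFGCC (Laplace-type representation),
`S_{α,β}(ω) = −(1/π) Im ∫₀^∞ e^{−ωu}(1 + e^{iπα/2}u^α)^{−β} du` (principal branch). -/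
noncomputable def gfgccSpectralDensity (α β ω : ℝ) : ℝ :=
  -(1 / Real.pi) * (∫ u in Set.Ioi (0 : ℝ),
      Complex.exp (-(ω * u : ℝ)) *
        (1 + Complex.exp ((Real.pi : ℂ) * (α : ℂ) / 2 * Complex.I) * (u : ℂ) ^ (α : ℂ))
          ^ (-(β : ℂ))).im

open MeasureTheory Set Topology

lemma gfgcc_real (α β : ℝ) (hα : 0 < α) (hβ : 0 < β) (hαβ : 1 < α * β) :
    IntegrableOn (fun u : ℝ => (1 + u ^ α) ^ (-β)) (Ioi 0) ∧
    ∫ u in Ioi (0:ℝ), (1 + u ^ α) ^ (-β) =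
      Real.Gamma (1 / α) * Real.Gamma (β - 1 / α) / (α * Real.Gamma β) := by
  have hs : 0 < β - 1 / α := by
    rw [sub_pos, div_lt_iff₀ hα]; linarith
  have hG := Real.Gamma_pos_of_pos hβ
  let f : ℝ → ℝ → ℝ := fun u s => s ^ (β - 1) * Real.exp (-((1 + u ^ α) * s))
  have hf1 : ∀ s ∈ Ioi (0:ℝ), ∫ u in Ioi (0:ℝ), f u s
      = Real.Gamma (1 / α + 1) * (Real.exp (-s) * s ^ ((β - 1 / α) - 1)) := by
    intro s hs0
    have hs0' : 0 < s := hs0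
    have : ∀ u, f u s = (s ^ (β - 1) * Real.exp (-s)) * Real.exp (-s * u ^ α) := by
      intro u
      simp only [f]
      rw [mul_assoc, ← Real.exp_add]; ring_nf
    simp_rw [this]
    rw [integral_const_mul, integral_exp_neg_mul_rpow hα hs0']
    have : s ^ ((β - 1 / α) - 1) = s ^ (β - 1) * s ^ (-1 / α) := by
      rw [← Real.rpow_add hs0']; ring_nf
    rw [this]; ring
  have hf2 : ∀ u ∈ Ioi (0:ℝ), ∫ s in Ioi (0:ℝ), f u s = (1 + u ^ α) ^ (-β) * Real.Gamma β := by
    intro u hu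
    have hu' : 0 < u := hu
    have h1 : 0 < 1 + u ^ α := by positivity
    simp only [f]
    rw [Real.integral_rpow_mul_exp_neg_mul_Ioi hβ h1, one_div, Real.inv_rpow h1.le,
      Real.rpow_neg h1.le]
  have hint : Integrable (Function.uncurry f)
      ((volume.restrict (Ioi (0:ℝ))).prod (volume.restrict (Ioi (0:ℝ)))) := by
    have hm : Measurable (Function.uncurry f) := by
      unfold Function.uncurry; simp only [f]; fun_prop
    rw [integrable_prod_iff' hm.aestronglyMeasurable]
    constructor
    · filter_upwards [ae_restrict_mem measurableSet_Ioi] with s hs0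
      have hs0' : 0 < s := hs0
      have := (integrableOn_rpow_mul_exp_neg_mul_rpow (s := 0) (by norm_num) hα hs0').const_mul
        (s ^ (β - 1) * Real.exp (-s))
      refine this.congr (ae_of_all _ fun u => ?_)
      simp only [f, Function.uncurry, Real.rpow_zero, one_mul]
      rw [mul_assoc, ← Real.exp_add]; ring_nf
    · have := (Real.GammaIntegral_convergent hs).const_mul (Real.Gamma (1 / α + 1))
      refine this.congr ?_
      filter_upwards [ae_restrict_mem measurableSet_Ioi] with s hs0
      rw [← hf1 s hs0]
      refine integral_congr_ae (ae_of_all _ fun u => ?_)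
      have hs0' : 0 < s := hs0
      simp only [f, Function.uncurry]
      rw [Real.norm_of_nonneg (by positivity)]
  constructor
  · have := hint.integral_prod_left.div_const (Real.Gamma β)
    refine this.congr ?_
    filter_upwards [ae_restrict_mem measurableSet_Ioi] with u hu
    have := hf2 u hu
    simp only [Function.uncurry]
    rw [this]; field_simp
  · have h := integral_integral_swap hint
    rw [setIntegral_congr_fun measurableSet_Ioi hf1, setIntegral_congr_fun measurableSet_Ioi hf2,
      integral_mul_const, integral_const_mul, ← Real.Gamma_eq_integral hs,
      Real.Gamma_add_one (by positivity)] at h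
    rw [eq_div_iff (by positivity)]
    have : α * (1 / α) = 1 := by field_simp
    calc _ = α * ((∫ u in Ioi (0:ℝ), (1 + u ^ α) ^ (-β)) * Real.Gamma β) := by ring
      _ = (α * (1 / α)) * (Real.Gamma (1 / α) * Real.Gamma (β - 1 / α)) := by rw [h]; ring
      _ = _ := by rw [this, one_mul]

lemma gfgcc_slit {c : ℂ} (hc : c ∈ Complex.slitPlane) {v : ℝ} (hv : 0 < v) :
    1 + c * (v : ℂ) ∈ Complex.slitPlane := by
  rw [Complex.mem_slitPlane_iff] at hc ⊢
  rcases hc with h | h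
  · left; simp; positivity
  · right; simp [h, hv.ne']

lemma gfgcc_lower {c₀ : ℂ} (hc : c₀ ∈ Complex.slitPlane) :
    ∃ δ > 0, ∀ c ∈ Metric.ball c₀ δ, ∀ v : ℝ, 0 < v → δ * (1 + v) ≤ ‖1 + c * (v : ℂ)‖ := by
  have hcont : ContinuousOn (fun t : ℝ => ‖(1 - t : ℂ) + c₀ * t‖) (Icc 0 1) := by fun_prop
  obtain ⟨t₀, ht₀, hmin⟩ := isCompact_Icc.exists_isMinOn (nonempty_Icc.2 zero_le_one) hcont
  have hpos : 0 < ‖(1 - t₀ : ℂ) + c₀ * t₀‖ := by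
    rw [norm_pos_iff]
    apply Complex.slitPlane_ne_zero
    have := Complex.starConvex_one_slitPlane hc (a := 1 - t₀) (b := t₀) (by linarith [ht₀.2]) ht₀.1
      (by ring)
    simpa [mul_comm] using this
  set m := ‖(1 - t₀ : ℂ) + c₀ * t₀‖ with hm
  refine ⟨m / 2, by positivity, fun c hcb v hv => ?_⟩
  have hv1 : (0:ℝ) < 1 + v := by linarith
  have ht : v / (1 + v) ∈ Icc (0:ℝ) 1 := ⟨by positivity, by rw [div_le_one hv1]; linarith⟩
  have h1 : m ≤ ‖(1 - (v / (1 + v) : ℝ) : ℂ) + c₀ * (v / (1 + v) : ℝ)‖ := hmin ht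
  have h2 : (1 + c₀ * v : ℂ) =
      ((1 + v : ℝ) : ℂ) * ((1 - (v / (1 + v) : ℝ) : ℂ) + c₀ * (v / (1 + v) : ℝ)) := by
    have : (1 + v : ℂ) ≠ 0 := by exact_mod_cast hv1.ne'
    push_cast; field_simp; ring
  have h3 : m * (1 + v) ≤ ‖1 + c₀ * (v : ℂ)‖ := by
    rw [h2, norm_mul, Complex.norm_real, Real.norm_of_nonneg hv1.le, mul_comm]
    gcongr
  have h4 : ‖1 + c₀ * (v : ℂ)‖ ≤ ‖1 + c * (v : ℂ)‖ + m / 2 * v := by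
    have e : 1 + c₀ * (v : ℂ) = (1 + c * (v : ℂ)) - (c - c₀) * v := by ring
    rw [e]
    refine (norm_sub_le _ _).trans ?_
    gcongr
    rw [norm_mul, Complex.norm_real, Real.norm_of_nonneg hv.le]
    have := (mem_ball_iff_norm.1 hcb).le
    gcongr
  nlinarith

lemma gfgcc_bound {δ γ w : ℝ} {z : ℂ} (hδ : 0 < δ) (hγ : 0 ≤ γ) (hw : 0 < w)
    (h : δ * w ≤ ‖z‖) : ‖z ^ (-(γ : ℂ))‖ ≤ δ ^ (-γ) * w ^ (-γ) := by
  rw [← Complex.ofReal_neg, Complex.norm_cpow_real, ← Real.mul_rpow hδ.le hw.le]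
  exact Real.rpow_le_rpow_of_nonpos (by positivity) h (by linarith)

lemma gfgcc_meas (c : ℂ) (α : ℝ) (γ : ℂ) :
    Measurable (fun u : ℝ => (1 + c * ((u ^ α : ℝ) : ℂ)) ^ γ) := by
  fun_prop

lemma gfgcc_integrable {α β : ℝ} (hα : 0 < α) (hβ : 0 < β) (hαβ : 1 < α * β)
    {c : ℂ} (hc : c ∈ Complex.slitPlane) :
    IntegrableOn (fun u : ℝ => (1 + c * ((u ^ α : ℝ) : ℂ)) ^ (-(β : ℂ))) (Ioi 0) := by
  obtain ⟨δ, hδ, h⟩ := gfgcc_lower hc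
  refine Integrable.mono' ((gfgcc_real α β hα hβ hαβ).1.const_mul (δ ^ (-β)))
    (gfgcc_meas _ _ _).aestronglyMeasurable ?_
  filter_upwards [ae_restrict_mem measurableSet_Ioi] with u hu
  have hu' : 0 < u ^ α := Real.rpow_pos_of_pos hu α
  exact gfgcc_bound hδ hβ.le (by positivity) (h c (Metric.mem_ball_self hδ) _ hu')

lemma gfgcc_diff {α β : ℝ} (hα : 0 < α) (hβ : 0 < β) (hαβ : 1 < α * β) :
    DifferentiableOn ℂ
      (fun c : ℂ => ∫ u in Ioi (0:ℝ), (1 + c * ((u ^ α : ℝ) : ℂ)) ^ (-(β : ℂ)))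
      Complex.slitPlane := by
  intro c₀ hc
  obtain ⟨δ, hδ, h⟩ := gfgcc_lower hc
  have hs : Metric.ball c₀ δ ∩ Complex.slitPlane ∈ 𝓝 c₀ :=
    Filter.inter_mem (Metric.ball_mem_nhds _ hδ) (Complex.isOpen_slitPlane.mem_nhds hc)
  have key := hasDerivAt_integral_of_dominated_loc_of_deriv_le
    (μ := volume.restrict (Ioi (0:ℝ))) (𝕜 := ℂ)
    (F := fun (c : ℂ) (u : ℝ) => (1 + c * ((u ^ α : ℝ) : ℂ)) ^ (-(β : ℂ)))
    (F' := fun (c : ℂ) (u : ℝ) =>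
      (-(β : ℂ)) * (1 + c * ((u ^ α : ℝ) : ℂ)) ^ (-(β : ℂ) - 1) * ((u ^ α : ℝ) : ℂ))
    (bound := fun u => (β * δ ^ (-(β + 1))) * (1 + u ^ α) ^ (-β))
    hs (Filter.Eventually.of_forall fun c => (gfgcc_meas _ _ _).aestronglyMeasurable)
    (gfgcc_integrable hα hβ hαβ hc)
    (Measurable.aestronglyMeasurable (by fun_prop)) ?_
    ((gfgcc_real α β hα hβ hαβ).1.const_mul _) ?_
  · exact key.2.differentiableAt.differentiableWithinAt
  · filter_upwards [ae_restrict_mem measurableSet_Ioi] with u hu c hcs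
    have hu' : 0 < u ^ α := Real.rpow_pos_of_pos hu α
    have hw : 0 < 1 + u ^ α := by positivity
    have hb := gfgcc_bound (γ := β + 1) hδ (by positivity) hw (h c hcs.1 _ hu')
    have e : (-(β : ℂ) - 1) = -((β + 1 : ℝ) : ℂ) := by push_cast; ring
    rw [e, norm_mul, norm_mul, norm_neg, Complex.norm_real, Complex.norm_real,
      Real.norm_of_nonneg hβ.le, Real.norm_of_nonneg hu'.le]
    have e2 : (1 + u ^ α) ^ (-β) = (1 + u ^ α) ^ (-(β + 1)) * (1 + u ^ α) := by
      rw [← Real.rpow_add_one hw.ne']; ring_nf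
    rw [e2]
    calc _ ≤ β * (δ ^ (-(β + 1)) * (1 + u ^ α) ^ (-(β + 1))) * (1 + u ^ α) := by
          gcongr; linarith
      _ = _ := by ring
  · filter_upwards [ae_restrict_mem measurableSet_Ioi] with u hu c hcs
    have hu' : 0 < u ^ α := Real.rpow_pos_of_pos hu α
    have h1 : HasDerivAt (fun c : ℂ => 1 + c * ((u ^ α : ℝ) : ℂ)) ((u ^ α : ℝ) : ℂ) c := by
      simpa using ((hasDerivAt_id c).mul_const ((u ^ α : ℝ) : ℂ)).const_add 1
    exact h1.cpow_const (gfgcc_slit hcs.2 hu')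

lemma gfgcc_pos {α β : ℝ} (hα : 0 < α) {r : ℝ} (hr : 0 < r) :
    ∫ u in Ioi (0:ℝ), (1 + (r : ℂ) * ((u ^ α : ℝ) : ℂ)) ^ (-(β : ℂ)) =
      (r : ℂ) ^ (-(1 / α : ℂ)) * ((∫ u in Ioi (0:ℝ), (1 + u ^ α) ^ (-β) : ℝ) : ℂ) := by
  have hb : 0 < r ^ (1 / α) := Real.rpow_pos_of_pos hr _
  have h := integral_comp_mul_left_Ioi (fun u : ℝ => (((1 + u ^ α) ^ (-β) : ℝ) : ℂ)) 0 hb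
  rw [mul_zero] at h
  have e : (r : ℂ) ^ (-(1 / α : ℂ)) = (((r ^ (1 / α))⁻¹ : ℝ) : ℂ) := by
    rw [← Real.rpow_neg hr.le, Complex.ofReal_cpow hr.le]; push_cast; rfl
  rw [e, ← Complex.real_smul, ← integral_complex_ofReal, ← h]
  refine setIntegral_congr_fun measurableSet_Ioi fun u hu => ?_
  have hu0 : 0 < u := hu
  have hu' : 0 < u ^ α := Real.rpow_pos_of_pos hu α
  rw [Real.mul_rpow hb.le hu0.le, ← Real.rpow_mul hr.le, one_div_mul_cancel hα.ne', Real.rpow_one,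
    Complex.ofReal_cpow (x := 1 + r * u ^ α) (by positivity), Complex.ofReal_add,
    Complex.ofReal_mul, Complex.ofReal_one, Complex.ofReal_neg]

lemma gfgcc_rot {α β : ℝ} (hα : 0 < α) (hβ : 0 < β) (hαβ : 1 < α * β) :
    EqOn (fun c : ℂ => ∫ u in Ioi (0:ℝ), (1 + c * ((u ^ α : ℝ) : ℂ)) ^ (-(β : ℂ)))
      (fun c : ℂ => c ^ (-(1 / α : ℂ)) * ((∫ u in Ioi (0:ℝ), (1 + u ^ α) ^ (-β) : ℝ) : ℂ))
      Complex.slitPlane := by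
  have hpre : IsPreconnected Complex.slitPlane :=
    (Complex.starConvex_one_slitPlane.isPathConnected (by simp)).isConnected.isPreconnected
  have hg : DifferentiableOn ℂ (fun c : ℂ => c ^ (-(1 / α : ℂ)) *
      ((∫ u in Ioi (0:ℝ), (1 + u ^ α) ^ (-β) : ℝ) : ℂ)) Complex.slitPlane := by
    intro c hc
    exact (((hasDerivAt_id c).cpow_const hc).mul_const _).differentiableAt.differentiableWithinAt
  refine ((gfgcc_diff hα hβ hαβ).analyticOnNhd
    Complex.isOpen_slitPlane).eqOn_of_preconnected_of_frequently_eq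
    (hg.analyticOnNhd Complex.isOpen_slitPlane) hpre (z₀ := 1) (by simp) ?_
  have ht : Tendsto (fun r : ℝ => (r : ℂ)) (𝓝[>] 1) (𝓝[≠] 1) := by
    refine tendsto_nhdsWithin_iff.2 ⟨?_, ?_⟩
    · have : Tendsto (fun r : ℝ => (r : ℂ)) (𝓝 1) (𝓝 ((1:ℝ) : ℂ)) :=
        Complex.continuous_ofReal.tendsto 1
      rw [Complex.ofReal_one] at this
      exact this.mono_left nhdsWithin_le_nhds
    · filter_upwards [self_mem_nhdsWithin] with r hr
      have : r ≠ 1 := ne_of_gt hr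
      simpa using this
  refine ht.frequently (Filter.Eventually.frequently ?_)
  filter_upwards [self_mem_nhdsWithin] with r hr
  exact gfgcc_pos hα (zero_lt_one.trans hr)

/-- Finite zero-frequency limit of the spectral density of the one-dimensional GFGCC in the
short-range-dependence regime `αβ > 1`:
`lim_{ω→0⁺} S_{α,β}(ω) = Γ(1/α)Γ(β − 1/α)/(παΓ(β))`. -/
theorem gfgcc_spectral_low_frequency_srd (α β : ℝ)
    (hα : α ∈ Set.Ioo (0 : ℝ) 2) (hβ : 0 < β) (hαβ : 1 < α * β) :
    Tendsto (gfgccSpectralDensity α β) (nhdsWithin 0 (Set.Ioi 0))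
      (nhds (Real.Gamma (1 / α) * Real.Gamma (β - 1 / α) / (Real.pi * α * Real.Gamma β))) := by
  obtain ⟨hα0, hα2⟩ := hα
  have hpi := Real.pi_pos
  set c : ℂ := Complex.exp ((Real.pi : ℂ) * (α : ℂ) / 2 * Complex.I) with hc
  have him : ((Real.pi : ℂ) * (α : ℂ) / 2 * Complex.I).im = Real.pi * α / 2 := by
    have : (Real.pi : ℂ) * (α : ℂ) / 2 * Complex.I = ((Real.pi * α / 2 : ℝ) : ℂ) * Complex.I := by
      push_cast; ring
    rw [this]; simp
  have hlog : Complex.log c = (Real.pi : ℂ) * (α : ℂ) / 2 * Complex.I := by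
    apply Complex.log_exp
    · rw [him]; nlinarith [mul_pos hpi hα0]
    · rw [him]; nlinarith
  have hcs : c ∈ Complex.slitPlane := by
    rw [Complex.mem_slitPlane_iff_arg]
    refine ⟨?_, Complex.exp_ne_zero _⟩
    rw [← Complex.log_im, hlog, him]
    nlinarith
  have hcp : c ^ (-(1 / α : ℂ)) = -Complex.I := by
    rw [Complex.cpow_def_of_ne_zero (Complex.exp_ne_zero _), hlog]
    have : (α : ℂ) ≠ 0 := by exact_mod_cast hα0.ne'
    have e : (Real.pi : ℂ) * (α : ℂ) / 2 * Complex.I * (-(1 / α : ℂ))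
      = -(Real.pi / 2 * Complex.I) := by field_simp
    rw [e, Complex.exp_neg, Complex.exp_pi_div_two_mul_I, Complex.inv_I]
  have hI := gfgcc_rot hα0 hβ hαβ hcs
  simp only [hcp, (gfgcc_real α β hα0 hβ hαβ).2] at hI
  have hlim : Tendsto (fun ω : ℝ => ∫ u in Set.Ioi (0 : ℝ),
      Complex.exp (-(ω * u : ℝ)) * (1 + c * (u : ℂ) ^ (α : ℂ)) ^ (-(β : ℂ)))
      (𝓝[>] 0) (𝓝 (∫ u in Ioi (0:ℝ), (1 + c * ((u ^ α : ℝ) : ℂ)) ^ (-(β : ℂ)))) := by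
    have hcongr : ∀ ω : ℝ, ∫ u in Set.Ioi (0 : ℝ),
        Complex.exp (-(ω * u : ℝ)) * (1 + c * (u : ℂ) ^ (α : ℂ)) ^ (-(β : ℂ))
        = ∫ u in Set.Ioi (0 : ℝ),
        Complex.exp (-(ω * u : ℝ)) * (1 + c * ((u ^ α : ℝ) : ℂ)) ^ (-(β : ℂ)) := by
      intro ω
      refine setIntegral_congr_fun measurableSet_Ioi fun u hu => ?_
      have hu0 : 0 < u := hu
      simp only [Complex.ofReal_cpow hu0.le]
    simp_rw [hcongr]
    refine tendsto_integral_filter_of_dominated_convergence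
      (fun u => ‖(1 + c * ((u ^ α : ℝ) : ℂ)) ^ (-(β : ℂ))‖) ?_ ?_
      (gfgcc_integrable hα0 hβ hαβ hcs).norm ?_
    · refine Eventually.of_forall fun ω => Measurable.aestronglyMeasurable ?_
      exact Measurable.mul (by fun_prop) (gfgcc_meas _ _ _)
    · filter_upwards [self_mem_nhdsWithin] with ω hω
      filter_upwards [ae_restrict_mem measurableSet_Ioi] with u hu
      rw [norm_mul]
      refine mul_le_of_le_one_left (norm_nonneg _) ?_
      rw [Complex.norm_exp, ← Complex.ofReal_neg, Complex.ofReal_re, Real.exp_le_one_iff]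
      have : 0 < ω * u := mul_pos hω hu
      linarith
    · refine ae_of_all _ fun u => ?_
      have h1 : Continuous (fun ω : ℝ =>
        Complex.exp (-(ω * u : ℝ)) * (1 + c * ((u ^ α : ℝ) : ℂ)) ^ (-(β : ℂ))) := by fun_prop
      have := (h1.tendsto 0).mono_left (nhdsWithin_le_nhds (s := Ioi 0))
      simpa using this
  rw [hI] at hlim
  have h2 := ((Complex.continuous_im.tendsto _).comp hlim).const_mul (-(1 / Real.pi))
  suffices h3 : Real.Gamma (1 / α) * Real.Gamma (β - 1 / α) / (Real.pi * α * Real.Gamma β) =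
      -(1 / Real.pi) * (-Complex.I *
        ((Real.Gamma (1 / α) * Real.Gamma (β - 1 / α) / (α * Real.Gamma β) : ℝ) : ℂ)).im by
    rw [h3]; exact h2
  rw [neg_mul Complex.I, Complex.neg_im, Complex.I_mul_im, Complex.ofReal_re]
  have := (Real.Gamma_pos_of_pos hβ).ne'
  field_simp
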